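/- Let k ≥ 2 and d ≥ k−1, and let G be the disjoint union of graphs G_1, …, G_t, each of which is d-regular on n vertices. Then some G_i contains a clique on k vertices if and only if there exist a vertex set U ⊆ V(G), a set D of edges of G−U, and a set A of unordered pairs of distinct non-adjacent vertices of V(G)∖U, with |U| + |D| + |A| ≤ k(k−1)/2, such that the degree multiset of G−U−D+A consists of nt−k copies of d and k copies of d−(k−1). -/

import Mathlib

/-- The degree of a vertex, as the `ncard` of its neighbor set. -/
noncomputable def ndeg {V : Type*} (H : SimpleGraph V) (v : V) : ℕ :=
  (H.neighborSet v).ncard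

/-- The graph `G - U - D + A`, obtained from `G` by deleting the vertices of `U`
(together with all incident edges), deleting the edges of `D` and adding the pairs of `A`
as edges. (The deleted vertices become isolated; degrees are only read off `V ∖ U`.) -/
def edit {V : Type*} (G : SimpleGraph V) (U : Finset V) (D A : Set (Sym2 V)) :
    SimpleGraph V :=
  SimpleGraph.fromEdgeSet ((G.edgeSet \ (D ∪ {e : Sym2 V | ∃ u ∈ U, u ∈ e})) ∪ A)

/-- The disjoint union of the family of graphs `Gs 0, …, Gs (t-1)`, realized on the
vertex set `Fin t × V`. -/
def disjUnion {t : ℕ} {V : Type*} (Gs : Fin t → SimpleGraph V) :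
    SimpleGraph (Fin t × V) where
  Adj x y := x.1 = y.1 ∧ (Gs x.1).Adj x.2 y.2
  symm := by
    refine ⟨?_⟩
    rintro ⟨i, u⟩ ⟨j, w⟩ ⟨h, hadj⟩
    cases h
    exact ⟨rfl, hadj.symm⟩
  loopless := by
    refine ⟨?_⟩
    rintro ⟨i, u⟩ ⟨-, hadj⟩
    exact (Gs i).loopless.irrefl u hadj

/-!
Deleting the edges inside a `k`-clique lowers exactly `k` degrees by `k - 1`, at cost `k.choose 2`.
Conversely, counting vertices forces `U = ∅`. Each of the `k` vertices of reduced degree has lost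
at least `k - 1` edges, whatever `A` is. This already accounts for all the `k * (k - 1)` endpoints
of deleted edges that the budget allows, so every deleted edge joins two of these `k` vertices, and
they form a clique.
-/

section

open Finset hiding disjUnion

/-- At most `b` vertex deletions, edge deletions and edge additions turn `G` into a graph with
degree multiset `M`, as in the degree sequence editing problem. Deleted vertices stay in the vertex
type, so degrees are read off outside `U` only. -/
def HasDegreeEdit {V : Type*} [Fintype V] [DecidableEq V] (G : SimpleGraph V) (b : ℕ)
    (M : Multiset ℕ) : Prop :=
  ∃ (U : Finset V) (D A : Finset (Sym2 V)),
    (∀ e ∈ D, e ∈ G.edgeSet ∧ ∀ u ∈ U, u ∉ e) ∧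
    (∀ e ∈ A, ¬ e.IsDiag ∧ e ∉ G.edgeSet ∧ ∀ u ∈ U, u ∉ e) ∧
    #U + #D + #A ≤ b ∧
    ((univ \ U).val.map fun v => ndeg (edit G U ↑D ↑A) v) = M

/-- The edges of the complete graph on the vertex set `S`, which are deleted to edit a graph in
which `S` is a clique. -/
def cliqueEdges {V : Type*} [DecidableEq V] (S : Finset V) : Finset (Sym2 V) :=
  {e ∈ S.sym2 | ¬ e.IsDiag}

theorem map_val_eq_add_iff {α β : Type*} [DecidableEq α] {T : Finset α} {f : α → β}
    {s t : Multiset β} :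
    T.val.map f = s + t ↔ ∃ S ⊆ T, (T \ S).val.map f = s ∧ S.val.map f = t := by
  constructor
  · intro h
    rw [← Multiset.rel_eq, Multiset.rel_map_left, Multiset.rel_add_right] at h
    obtain ⟨s', t', hs, ht, hT⟩ := h
    rw [← Multiset.rel_map_left, Multiset.rel_eq] at hs ht
    have ht' : t' ≤ T.val := hT ▸ Multiset.le_add_left t' s'
    have hs' : T.val - t' = s' := by rw [hT, add_tsub_cancel_right]
    exact ⟨⟨t', Multiset.nodup_of_le ht' T.nodup⟩, val_le_iff.1 ht', by rw [sdiff_val, hs', hs], ht⟩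
  · rintro ⟨S, hST, rfl, rfl⟩
    rw [← Multiset.map_add, sdiff_val, tsub_add_cancel_of_le (val_le_iff.2 hST)]

theorem map_val_eq_replicate_iff {α β : Type*} {S : Finset α} {f : α → β} {m : ℕ} {b : β} :
    S.val.map f = Multiset.replicate m b ↔ #S = m ∧ ∀ x ∈ S, f x = b := by
  simp only [Multiset.eq_replicate, Multiset.card_map, Finset.card_val, Multiset.mem_map,
    Finset.mem_val, forall_exists_index, and_imp, forall_apply_eq_imp_iff₂]

section Graph

variable {V : Type*} {G H : SimpleGraph V} {S : Finset V}

theorem ndeg_eq_degree (G : SimpleGraph V) (v : V) [Fintype (G.neighborSet v)] :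
    ndeg G v = G.degree v := by
  rw [ndeg, Set.ncard_eq_toFinset_card', ← SimpleGraph.neighborFinset_def,
    SimpleGraph.card_neighborFinset_eq_degree]

theorem ndeg_le_add_of_le_sup [Finite V] {K : SimpleGraph V} (h : G ≤ H ⊔ K) (v : V) :
    ndeg G v ≤ ndeg H v + ndeg K v :=
  (Set.ncard_le_ncard fun _ hw => h hw).trans (Set.ncard_union_le _ _)

theorem edit_empty (G : SimpleGraph V) (D A : Set (Sym2 V)) :
    edit G ∅ D A = G.deleteEdges D ⊔ SimpleGraph.fromEdgeSet A := by
  simp only [edit, notMem_empty, false_and, exists_false, Set.ofPred_false, Set.union_empty,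
    SimpleGraph.fromEdgeSet_union, SimpleGraph.fromEdgeSet_sdiff, SimpleGraph.fromEdgeSet_edgeSet,
    SimpleGraph.deleteEdges]

theorem isClique_of_card_sub_one_le_ndeg [Finite V] (hdeg : ∀ v ∈ S, #S - 1 ≤ ndeg H v)
    (hcard : H.edgeSet.ncard ≤ (#S).choose 2) : H.IsClique S := by
  classical
  have := Fintype.ofFinite V
  simp only [ndeg_eq_degree] at hdeg
  rw [Set.ncard_eq_toFinset_card', ← SimpleGraph.edgeFinset, Nat.choose_two_right] at hcard
  have hupper : ∑ v ∈ S, H.degree v + ∑ v ∈ Sᶜ, H.degree v ≤ #S * (#S - 1) := by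
    rw [sum_add_sum_compl, H.sum_degrees_eq_twice_card_edges]
    lia
  have hlower : #S * (#S - 1) ≤ ∑ v ∈ S, H.degree v := card_nsmul_le_sum S _ _ hdeg
  have hzero : ∀ w ∈ Sᶜ, H.degree w = 0 := sum_eq_zero_iff.1 (by lia)
  have hsub (v : V) : H.neighborFinset v ⊆ S.erase v := by
    intro w hw
    have hvw : H.Adj v w := (H.mem_neighborFinset v w).1 hw
    refine mem_erase.2 ⟨hvw.ne', ?_⟩
    by_contra hwS
    exact ((H.degree_pos_iff_exists_adj w).2 ⟨v, hvw.symm⟩).ne' (hzero w (mem_compl.2 hwS))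
  intro v hv w hw hvw
  have heq : H.neighborFinset v = S.erase v :=
    eq_of_subset_of_card_le (hsub v) (by simpa [card_erase_of_mem hv] using hdeg v hv)
  rw [← H.mem_neighborFinset, heq]
  exact mem_erase.2 ⟨hvw.symm, hw⟩

theorem isClique_of_ndeg_edit_add_le [Finite V] {D : Finset (Sym2 V)} {A : Set (Sym2 V)}
    (hdeg : ∀ v ∈ S, ndeg (edit G ∅ ↑D A) v + (#S - 1) ≤ ndeg G v)
    (hD : #D ≤ (#S).choose 2) : G.IsClique S := by
  let H := G ⊓ SimpleGraph.fromEdgeSet (D : Set (Sym2 V))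
  have hcover : G ≤ edit G ∅ ↑D A ⊔ H := by
    rw [edit_empty, SimpleGraph.deleteEdges, sup_right_comm, sup_comm (G \ _), sup_inf_sdiff]
    exact le_sup_left
  have hHdeg : ∀ v ∈ S, #S - 1 ≤ ndeg H v := fun v hv =>
    Nat.add_le_add_iff_left.1 <| (hdeg v hv).trans <| ndeg_le_add_of_le_sup hcover v
  have hHsub : H.edgeSet ⊆ ↑D := by
    rw [SimpleGraph.edgeSet_inf, SimpleGraph.edgeSet_fromEdgeSet]
    exact fun e he => he.2.1
  have hHcard : H.edgeSet.ncard ≤ #D :=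
    (Set.ncard_le_ncard hHsub).trans_eq (Set.ncard_coe_finset D)
  exact (isClique_of_card_sub_one_le_ndeg hHdeg (hHcard.trans hD)).mono inf_le_left

section CliqueEdges

variable [DecidableEq V]

theorem mk_mem_cliqueEdges {a b : V} : s(a, b) ∈ cliqueEdges S ↔ (a ∈ S ∧ b ∈ S) ∧ a ≠ b := by
  simp only [cliqueEdges, mem_filter, mk_mem_sym2_iff, Sym2.mk_isDiag_iff, ne_eq]

theorem card_cliqueEdges (S : Finset V) : #(cliqueEdges S) = (#S).choose 2 := by
  rw [cliqueEdges, sym2_eq_image, Sym2.filter_image_mk_not_isDiag, Sym2.card_image_offDiag]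

theorem mem_edgeSet_of_mem_cliqueEdges (hS : G.IsClique S) {e : Sym2 V} (he : e ∈ cliqueEdges S) :
    e ∈ G.edgeSet := by
  induction e with
  | _ a b =>
    obtain ⟨⟨ha, hb⟩, hab⟩ := mk_mem_cliqueEdges.1 he
    exact hS ha hb hab

theorem ndeg_deleteEdges_cliqueEdges_of_mem (hS : G.IsClique S) {v : V} (hv : v ∈ S) :
    ndeg (G.deleteEdges ↑(cliqueEdges S)) v = ndeg G v - (#S - 1) := by
  have hnbr : (G.deleteEdges ↑(cliqueEdges S)).neighborSet v = G.neighborSet v \ ↑(S.erase v) := by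
    ext w
    simp only [SimpleGraph.mem_neighborSet, SimpleGraph.deleteEdges_adj, mem_coe,
      mk_mem_cliqueEdges, hv, true_and, Set.mem_sdiff, mem_erase, and_comm, ne_comm]
  have hsub : ↑(S.erase v) ⊆ G.neighborSet v := fun w hw =>
    hS hv (mem_of_mem_erase hw) (ne_of_mem_erase hw).symm
  rw [ndeg, hnbr, Set.ncard_sdiff hsub, Set.ncard_coe_finset, card_erase_of_mem hv, ndeg]

theorem ndeg_deleteEdges_cliqueEdges_of_notMem {v : V} (hv : v ∉ S) :
    ndeg (G.deleteEdges ↑(cliqueEdges S)) v = ndeg G v := by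
  have hnbr : (G.deleteEdges ↑(cliqueEdges S)).neighborSet v = G.neighborSet v := by
    ext w
    simp only [SimpleGraph.mem_neighborSet, SimpleGraph.deleteEdges_adj, mem_coe,
      mk_mem_cliqueEdges, hv, false_and, not_false_eq_true, and_true]
  rw [ndeg, hnbr, ndeg]

end CliqueEdges

variable [Fintype V] [DecidableEq V] {k d : ℕ}

theorem hasDegreeEdit_of_isNClique (hreg : ∀ v, ndeg G v = d) (hS : G.IsNClique k S) :
    HasDegreeEdit G (k.choose 2)
      (Multiset.replicate (Fintype.card V - k) d + Multiset.replicate k (d - (k - 1))) := by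
  obtain ⟨hclique, rfl⟩ := hS
  refine ⟨∅, cliqueEdges S, ∅, fun e he => ⟨mem_edgeSet_of_mem_cliqueEdges hclique he, by simp⟩,
    by simp, by simp [card_cliqueEdges], ?_⟩
  simp only [coe_empty, edit_empty, SimpleGraph.fromEdgeSet_empty, sup_bot_eq, sdiff_empty]
  refine map_val_eq_add_iff.2 ⟨S, subset_univ S, map_val_eq_replicate_iff.2 ⟨?_, fun v hv => ?_⟩,
    map_val_eq_replicate_iff.2 ⟨rfl, fun v hv => ?_⟩⟩
  · rw [← compl_eq_univ_sdiff, card_compl]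
  · rw [ndeg_deleteEdges_cliqueEdges_of_notMem (mem_sdiff.1 hv).2, hreg]
  · rw [ndeg_deleteEdges_cliqueEdges_of_mem hclique hv, hreg]

theorem exists_isNClique_of_hasDegreeEdit (hd : k - 1 ≤ d) (hreg : ∀ v, ndeg G v = d)
    (h : HasDegreeEdit G (k.choose 2)
      (Multiset.replicate (Fintype.card V - k) d + Multiset.replicate k (d - (k - 1)))) :
    ∃ S, G.IsNClique k S := by
  obtain ⟨U, D, A, -, -, hbudget, hdeg⟩ := h
  obtain ⟨S, hSU, hhigh, hlow⟩ := map_val_eq_add_iff.1 hdeg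
  obtain ⟨hcompl, -⟩ := map_val_eq_replicate_iff.1 hhigh
  obtain ⟨rfl, hlow⟩ := map_val_eq_replicate_iff.1 hlow
  obtain rfl : U = ∅ := by
    rw [card_sdiff_of_subset hSU, ← compl_eq_univ_sdiff, card_compl] at hcompl
    have hle := card_le_card hSU
    rw [← compl_eq_univ_sdiff, card_compl] at hle
    have := card_le_univ U
    rw [← card_eq_zero]
    lia
  refine ⟨S, isClique_of_ndeg_edit_add_le (D := D) (A := ↑A) (fun v hv => ?_) (by lia), rfl⟩
  rw [hlow v hv, hreg, Nat.sub_add_cancel hd]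

end Graph

section DisjUnion

variable {t : ℕ} {V : Type*}

/-- The `i`-th summand as an induced subgraph of the disjoint union. -/
def disjUnionEmbedding (Gs : Fin t → SimpleGraph V) (i : Fin t) : Gs i ↪g disjUnion Gs where
  toFun := Prod.mk i
  inj' := Prod.mk_right_injective i
  map_rel_iff' := and_iff_right rfl

theorem ndeg_disjUnion (Gs : Fin t → SimpleGraph V) (x : Fin t × V) :
    ndeg (disjUnion Gs) x = ndeg (Gs x.1) x.2 := by
  have hnbr : (disjUnion Gs).neighborSet x = Prod.mk x.1 '' (Gs x.1).neighborSet x.2 := by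
    ext ⟨j, w⟩
    simp only [SimpleGraph.mem_neighborSet, disjUnion, Set.mem_image, Prod.mk.injEq]
    exact ⟨fun ⟨hj, hw⟩ => ⟨w, hw, hj, rfl⟩, fun ⟨_, hw, hj, hww⟩ => ⟨hj, hww ▸ hw⟩⟩
  rw [ndeg, hnbr, Set.ncard_image_of_injective _ (Prod.mk_right_injective x.1), ndeg]

theorem exists_isNClique_disjUnion_iff {Gs : Fin t → SimpleGraph V} {k : ℕ} (hk : k ≠ 0) :
    (∃ S, (disjUnion Gs).IsNClique k S) ↔ ∃ i K, (Gs i).IsNClique k K := by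
  classical
  constructor
  · rintro ⟨S, hS, rfl⟩
    obtain ⟨x, hx⟩ := card_ne_zero.1 hk
    have hfst : ∀ y ∈ S, y.1 = x.1 := fun y hy => by
      rcases eq_or_ne y x with rfl | hyx
      · rfl
      · exact (hS hy hx hyx).1
    have hinj : Set.InjOn Prod.snd (S : Set (Fin t × V)) := fun p hp q hq hpq =>
      Prod.ext ((hfst p hp).trans (hfst q hq).symm) hpq
    refine ⟨x.1, S.image Prod.snd, ?_, card_image_of_injOn hinj⟩
    rw [SimpleGraph.isClique_iff, coe_image, hinj.pairwise_image]
    exact fun p hp q hq hpq => hfst p hp ▸ (hS hp hq hpq).2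
  · rintro ⟨i, K, hK⟩
    let f := disjUnionEmbedding Gs i
    exact ⟨K.map f.toEmbedding,
      hK.map.mono (SimpleGraph.map_le_iff_le_comap _ _ _ |>.2 f.comap_eq.ge)⟩

end DisjUnion

end

theorem clique_in_some_summand_iff_edit_to_degree_sequence
    {t : ℕ} {V : Type*} [Fintype V] [DecidableEq V] (n k d : ℕ) (hk : 2 ≤ k)
    (hd : k - 1 ≤ d) (hn : Fintype.card V = n)
    (Gs : Fin t → SimpleGraph V) (hreg : ∀ i : Fin t, ∀ v : V, ndeg (Gs i) v = d) :
    (∃ i : Fin t, ∃ K : Finset V, (Gs i).IsNClique k K) ↔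
      ∃ (U : Finset (Fin t × V)) (D A : Finset (Sym2 (Fin t × V))),
        (∀ e ∈ D, e ∈ (disjUnion Gs).edgeSet ∧ ∀ u ∈ U, u ∉ e) ∧
        (∀ e ∈ A, ¬ e.IsDiag ∧ e ∉ (disjUnion Gs).edgeSet ∧ ∀ u ∈ U, u ∉ e) ∧
        U.card + D.card + A.card ≤ k * (k - 1) / 2 ∧
        ((Finset.univ \ U).val.map fun v => ndeg (edit (disjUnion Gs) U ↑D ↑A) v) =
          Multiset.replicate (n * t - k) d + Multiset.replicate k (d - (k - 1)) := by
  have hreg' : ∀ x, ndeg (disjUnion Gs) x = d := fun x =>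
    (ndeg_disjUnion Gs x).trans (hreg x.1 x.2)
  have hcard : Fintype.card (Fin t × V) = n * t := by
    rw [Fintype.card_prod, Fintype.card_fin, hn, mul_comm]
  rw [← exists_isNClique_disjUnion_iff (by lia), ← Nat.choose_two_right, ← hcard]
  exact ⟨fun ⟨_, hS⟩ => hasDegreeEdit_of_isNClique hreg' hS,
    exists_isNClique_of_hasDegreeEdit hd hreg'⟩
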